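/- For positive definite n×n matrices ρ, σ and α ∈ (1, 2], the map (ρ,σ) ↦ (tr((σ^{(1−α)/(2α)} ρ σ^{(1−α)/(2α)})^α))^{1/(α−1)} is jointly convex on pairs of positive definite matrices with fixed tr(ρ) = t. -/

import Mathlib

open Matrix ComplexOrder

/-- Functional calculus for Hermitian matrices: apply `f` to the eigenvalues. -/
noncomputable def mfun {m : Type*} [Fintype m] [DecidableEq m] (f : ℝ → ℝ)
    (A : Matrix m m ℂ) : Matrix m m ℂ :=
  if hA : A.IsHermitian then
    (hA.eigenvectorUnitary : Matrix m m ℂ) *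
      Matrix.diagonal (fun i => (f (hA.eigenvalues i) : ℂ)) *
      (star (hA.eigenvectorUnitary : Matrix m m ℂ))
  else 0

/-- Real matrix power via the functional calculus. -/
noncomputable def mpow {m : Type*} [Fintype m] [DecidableEq m]
    (A : Matrix m m ℂ) (p : ℝ) : Matrix m m ℂ :=
  mfun (fun x => x ^ p) A


section helpers

variable {n : Type*} [Fintype n] [DecidableEq n]

lemma mfun_eq_cfc {A : Matrix n n ℂ} (hA : A.IsHermitian) (f : ℝ → ℝ) :
    mfun f A = cfc f A := by
  rw [hA.cfc_eq, mfun, dif_pos hA]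
  simp [Matrix.IsHermitian.cfc, Unitary.conjStarAlgAut_apply, Function.comp_def]

lemma contOn_spec (A : Matrix n n ℂ) (f : ℝ → ℝ) : ContinuousOn f (spectrum ℝ A) :=
  Matrix.finite_real_spectrum.continuousOn f

lemma mfun_herm (A : Matrix n n ℂ) (f : ℝ → ℝ) : (mfun f A).IsHermitian := by
  by_cases hA : A.IsHermitian
  · rw [mfun_eq_cfc hA]
    exact cfc_predicate f A
  · rw [mfun, dif_neg hA]
    exact Matrix.isHermitian_zero

lemma mfun_mul_mfun {A : Matrix n n ℂ} (hA : A.IsHermitian) (f g : ℝ → ℝ) :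
    mfun f A * mfun g A = mfun (fun x => f x * g x) A := by
  rw [mfun_eq_cfc hA, mfun_eq_cfc hA, mfun_eq_cfc hA,
    cfc_mul f g A (contOn_spec A f) (contOn_spec A g)]

lemma mfun_mfun {A : Matrix n n ℂ} (hA : A.IsHermitian) (f g : ℝ → ℝ) :
    mfun g (mfun f A) = mfun (fun x => g (f x)) A := by
  rw [mfun_eq_cfc (mfun_herm A f), mfun_eq_cfc hA, mfun_eq_cfc hA]
  exact (cfc_comp' g f A ((Matrix.finite_real_spectrum.image f).continuousOn g)
    (contOn_spec A f) hA.isSelfAdjoint).symm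

lemma mfun_congr {A : Matrix n n ℂ} (hA : A.IsHermitian) {f g : ℝ → ℝ}
    (h : ∀ i, f (hA.eigenvalues i) = g (hA.eigenvalues i)) : mfun f A = mfun g A := by
  simp [mfun, dif_pos hA, h]

lemma mfun_one {A : Matrix n n ℂ} (hA : A.IsHermitian) : mfun (fun _ => 1) A = 1 := by
  simp [mfun, dif_pos hA]

lemma mfun_id {A : Matrix n n ℂ} (hA : A.IsHermitian) : mfun (fun x => x) A = A := by
  rw [mfun_eq_cfc hA]
  exact cfc_id' ℝ A hA.isSelfAdjoint

lemma trace_mfun {A : Matrix n n ℂ} (hA : A.IsHermitian) (f : ℝ → ℝ) :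
    (mfun f A).trace.re = ∑ i, f (hA.eigenvalues i) := by
  rw [mfun, dif_pos hA, Matrix.trace_mul_comm, ← mul_assoc]
  simp [Matrix.trace_diagonal]

lemma mfun_psd {A : Matrix n n ℂ} (hA : A.PosSemidef) {f : ℝ → ℝ}
    (hf : ∀ x, 0 ≤ x → 0 ≤ f x) : (mfun f A).PosSemidef := by
  rw [mfun, dif_pos hA.1]
  refine Matrix.PosSemidef.mul_mul_conjTranspose_same ?_ _
  refine Matrix.PosSemidef.diagonal fun i => ?_
  simpa using hf _ (hA.eigenvalues_nonneg i)

/-- Matrix of `K` in the two eigenbases. -/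
noncomputable def wmat {A B : Matrix n n ℂ} (hA : A.IsHermitian) (hB : B.IsHermitian)
    (K : Matrix n n ℂ) : Matrix n n ℂ :=
  star (hA.eigenvectorUnitary : Matrix n n ℂ) * K * (hB.eigenvectorUnitary : Matrix n n ℂ)

lemma master {A B : Matrix n n ℂ} (hA : A.IsHermitian) (hB : B.IsHermitian)
    (K : Matrix n n ℂ) (f g : ℝ → ℝ) :
    (Kᴴ * mfun f A * K * mfun g B).trace.re =
      ∑ i, ∑ j, Complex.normSq (wmat hA hB K i j) *
        (f (hA.eigenvalues i) * g (hB.eigenvalues j)) := by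
  have h1 : (Kᴴ * mfun f A * K * mfun g B).trace =
      ((wmat hA hB K)ᴴ * (Matrix.diagonal (fun i => (f (hA.eigenvalues i) : ℂ)) *
        wmat hA hB K * Matrix.diagonal (fun i => (g (hB.eigenvalues i) : ℂ)))).trace := by
    rw [mfun, dif_pos hA, mfun, dif_pos hB, wmat]
    simp only [Matrix.conjTranspose_mul, Matrix.star_eq_conjTranspose,
      Matrix.conjTranspose_conjTranspose, ← mul_assoc]
    rw [Matrix.trace_mul_comm]
    simp only [← mul_assoc]
  rw [h1, Matrix.trace, Finset.sum_comm]
  simp only [Matrix.diag_apply, Matrix.mul_apply (M := (wmat hA hB K)ᴴ), Matrix.mul_diagonal,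
    Matrix.diagonal_mul, Matrix.conjTranspose_apply, Complex.re_sum]
  refine Finset.sum_congr rfl fun j _ => Finset.sum_congr rfl fun i _ => ?_
  simp [Complex.normSq_apply]
  ring

lemma trace_young {A B : Matrix n n ℂ} (hA : A.PosSemidef) (hB : B.PosSemidef)
    {f g F G : ℝ → ℝ} (h : ∀ x y, 0 ≤ x → 0 ≤ y → f x * g y ≤ F x + G y) :
    (mfun f A * mfun g B).trace.re ≤ (mfun F A).trace.re + (mfun G B).trace.re := by
  have e (f g : ℝ → ℝ) := master hA.1 hB.1 1 f g
  simp only [Matrix.conjTranspose_one, one_mul, mul_one] at e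
  have e2 := e F (fun _ => 1)
  have e3 := e (fun _ => 1) G
  rw [mfun_one hB.1, mul_one] at e2
  rw [mfun_one hA.1, one_mul] at e3
  rw [e f g, e2, e3, ← Finset.sum_add_distrib]
  refine Finset.sum_le_sum fun i _ => ?_
  rw [← Finset.sum_add_distrib]
  refine Finset.sum_le_sum fun j _ => ?_
  rw [← mul_add]
  refine mul_le_mul_of_nonneg_left ?_ (Complex.normSq_nonneg _)
  simpa using h _ _ (hA.eigenvalues_nonneg i) (hB.eigenvalues_nonneg j)

lemma trace_flip (C : Matrix n n ℂ) (f : ℝ → ℝ) :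
    (mfun f (C * Cᴴ)).trace.re = (mfun f (Cᴴ * C)).trace.re := by
  have h1 := Matrix.isHermitian_mul_conjTranspose_self C
  have h2 := Matrix.isHermitian_conjTranspose_mul_self C
  rw [trace_mfun h1, trace_mfun h2,
    (Matrix.IsHermitian.eigenvalues_eq_eigenvalues_iff h1 h2).2 (Matrix.charpoly_mul_comm _ _)]

/-- The parallel-sum quadratic form. -/
noncomputable def hform {A B : Matrix n n ℂ} (hA : A.IsHermitian) (hB : B.IsHermitian)
    (K : Matrix n n ℂ) (l : ℝ) : ℝ :=
  ∑ i, ∑ j, Complex.normSq (wmat hA hB K i j) *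
    (hA.eigenvalues i * hB.eigenvalues j / (l * hA.eigenvalues i + hB.eigenvalues j))

noncomputable def qform (A B K M : Matrix n n ℂ) (l : ℝ) : ℝ :=
  (Mᴴ * A * M).trace.re + l⁻¹ * ((K - M)ᴴ * (K - M) * B).trace.re

lemma qform_eq {A B : Matrix n n ℂ} (hA : A.IsHermitian) (hB : B.IsHermitian)
    (K M : Matrix n n ℂ) (l : ℝ) : qform A B K M l = ∑ i, ∑ j,
      (Complex.normSq (wmat hA hB M i j) * hA.eigenvalues i + l⁻¹ *
        (Complex.normSq (wmat hA hB K i j - wmat hA hB M i j) * hB.eigenvalues j)) := by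
  have e1 := master hA hB M (fun x => x) (fun _ => 1)
  have e2 := master hA hB (K - M) (fun _ => 1) (fun x => x)
  rw [mfun_one hB, mul_one, mfun_id hA] at e1
  rw [mfun_one hA, mul_one, mfun_id hB] at e2
  have e3 : wmat hA hB (K - M) = wmat hA hB K - wmat hA hB M := by
    simp [wmat, mul_sub, sub_mul]
  rw [qform, e1, e2, e3, Finset.mul_sum, ← Finset.sum_add_distrib]
  refine Finset.sum_congr rfl fun i _ => ?_
  rw [Finset.mul_sum, ← Finset.sum_add_distrib]
  simp

lemma parallel_scalar (k m : ℂ) {a b l : ℝ} (ha : 0 < a) (hb : 0 ≤ b) (hl : 0 < l) :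
    Complex.normSq k * (a * b / (l * a + b)) ≤
      Complex.normSq m * a + l⁻¹ * (Complex.normSq (k - m) * b) := by
  have hd : 0 < l * a + b := by positivity
  rw [← mul_div_assoc, div_le_iff₀ hd, ← sub_nonneg]
  have : (Complex.normSq m * a + l⁻¹ * (Complex.normSq (k - m) * b)) * (l * a + b) -
      Complex.normSq k * (a * b) =
      l⁻¹ * ((l * a * m.re - b * (k.re - m.re)) ^ 2 + (l * a * m.im - b * (k.im - m.im)) ^ 2) := by
    simp only [Complex.normSq_apply, Complex.sub_re, Complex.sub_im]
    field_simp
    ring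
  rw [this]
  positivity

lemma hform_le {A B : Matrix n n ℂ} (hA : A.PosDef) (hB : B.PosSemidef)
    (K M : Matrix n n ℂ) {l : ℝ} (hl : 0 < l) : hform hA.1 hB.1 K l ≤ qform A B K M l := by
  rw [qform_eq hA.1 hB.1, hform]
  exact Finset.sum_le_sum fun i _ => Finset.sum_le_sum fun j _ =>
    parallel_scalar _ _ (hA.eigenvalues_pos i) (hB.eigenvalues_nonneg j) hl

lemma hform_attained {A B : Matrix n n ℂ} (hA : A.PosDef) (hB : B.PosSemidef)
    (K : Matrix n n ℂ) {l : ℝ} (hl : 0 < l) : ∃ M, hform hA.1 hB.1 K l = qform A B K M l := by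
  let W : Matrix n n ℂ := fun i j => wmat hA.1 hB.1 K i j *
    ((hB.1.eigenvalues j / (l * hA.1.eigenvalues i + hB.1.eigenvalues j) : ℝ) : ℂ)
  refine ⟨(hA.1.eigenvectorUnitary : Matrix n n ℂ) * W *
    star (hB.1.eigenvectorUnitary : Matrix n n ℂ), ?_⟩
  have hW : wmat hA.1 hB.1 ((hA.1.eigenvectorUnitary : Matrix n n ℂ) * W *
    star (hB.1.eigenvectorUnitary : Matrix n n ℂ)) = W := by
    simp only [wmat, mul_assoc, Unitary.coe_star_mul_self, mul_one]
    rw [← mul_assoc, Unitary.coe_star_mul_self, one_mul]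
  rw [qform_eq hA.1 hB.1, hform, hW]
  refine Finset.sum_congr rfl fun i _ => Finset.sum_congr rfl fun j _ => ?_
  have ha := hA.eigenvalues_pos i
  have hb := hB.eigenvalues_nonneg j
  have hd : 0 < l * hA.1.eigenvalues i + hB.1.eigenvalues j := by positivity
  simp only [W]
  generalize hA.1.eigenvalues i = a at *
  generalize hB.1.eigenvalues j = b at *
  simp only [Complex.normSq_apply, Complex.sub_re, Complex.sub_im, Complex.re_mul_ofReal,
    Complex.im_mul_ofReal]
  field_simp
  ring

lemma qform_affine (A₀ A₁ B₀ B₁ K M : Matrix n n ℂ) (l s : ℝ) :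
    qform (((1 - s : ℝ) : ℂ) • A₀ + (s : ℂ) • A₁) (((1 - s : ℝ) : ℂ) • B₀ + (s : ℂ) • B₁) K M l =
    (1 - s) * qform A₀ B₀ K M l + s * qform A₁ B₁ K M l := by
  simp only [qform, mul_add, add_mul, Matrix.mul_smul, Matrix.smul_mul, Matrix.trace_add,
    Matrix.trace_smul, Complex.add_re, smul_eq_mul, Complex.re_ofReal_mul]
  ring

lemma lieb_integral {A B : Matrix n n ℂ} (hA : A.PosDef) (hB : B.PosSemidef)
    (K : Matrix n n ℂ) {q : ℝ} (hq : q ∈ Set.Ioo (0 : ℝ) 1) :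
    MeasureTheory.IntegrableOn (fun l => l ^ (q - 1) * hform hA.1 hB.1 K l) (Set.Ioi 0) ∧
    ∫ l in Set.Ioi 0, l ^ (q - 1) * hform hA.1 hB.1 K l =
      (Kᴴ * mpow A (1 - q) * K * mpow B q).trace.re *
        ∫ t in Set.Ioi 0, Real.rpowIntegrand₀₁ q t 1 := by
  let F : ℝ → ℝ := fun l => ∑ i, ∑ j, Complex.normSq (wmat hA.1 hB.1 K i j) *
    (hA.1.eigenvalues i * Real.rpowIntegrand₀₁ q l (hB.1.eigenvalues j / hA.1.eigenvalues i))
  have hnn (i j) : 0 ≤ hB.1.eigenvalues j / hA.1.eigenvalues i :=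
    div_nonneg (hB.eigenvalues_nonneg j) (hA.eigenvalues_pos i).le
  have hF : Set.EqOn F (fun l => l ^ (q - 1) * hform hA.1 hB.1 K l) (Set.Ioi 0) := by
    intro l hl
    have hl' : 0 < l := hl
    simp only [F, hform, Finset.mul_sum]
    refine Finset.sum_congr rfl fun i _ => Finset.sum_congr rfl fun j _ => ?_
    rw [Real.rpowIntegrand₀₁_eq_pow_div hq hl'.le (hnn i j)]
    have ha := hA.eigenvalues_pos i
    have hb := hB.eigenvalues_nonneg j
    generalize hA.1.eigenvalues i = a at *
    generalize hB.1.eigenvalues j = b at *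
    have h1 : l + b / a ≠ 0 := by positivity
    have h2 : l * a + b ≠ 0 := by positivity
    have h3 : l + b / a = (l * a + b) / a := by field_simp
    rw [h3]
    field_simp
  have hint (i j) : MeasureTheory.Integrable (fun l => Complex.normSq (wmat hA.1 hB.1 K i j) *
    (hA.1.eigenvalues i * Real.rpowIntegrand₀₁ q l (hB.1.eigenvalues j / hA.1.eigenvalues i)))
      (MeasureTheory.volume.restrict (Set.Ioi 0)) :=
    ((Real.integrableOn_rpowIntegrand₀₁_Ioi hq (hnn i j)).const_mul _).const_mul _
  constructor
  · refine MeasureTheory.IntegrableOn.congr_fun ?_ hF measurableSet_Ioi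
    exact MeasureTheory.integrable_finsetSum _ fun i _ =>
      MeasureTheory.integrable_finsetSum _ fun j _ => hint i j
  · rw [← MeasureTheory.setIntegral_congr_fun measurableSet_Ioi hF]
    simp only [F]
    rw [MeasureTheory.integral_finsetSum _ fun i _ =>
      MeasureTheory.integrable_finsetSum _ fun j _ => hint i j, mpow, mpow,
      master hA.1 hB.1, Finset.sum_mul]
    refine Finset.sum_congr rfl fun i _ => ?_
    rw [MeasureTheory.integral_finsetSum _ fun j _ => hint i j, Finset.sum_mul]
    refine Finset.sum_congr rfl fun j _ => ?_
    rw [MeasureTheory.integral_const_mul, MeasureTheory.integral_const_mul,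
      Real.integral_rpowIntegrand₀₁_eq_rpow_mul_const hq (hnn i j)]
    have ha := hA.eigenvalues_pos i
    have hb := hB.eigenvalues_nonneg j
    rw [Real.div_rpow hb ha.le, Real.rpow_sub ha, Real.rpow_one]
    ring

lemma mix_psd {A B : Matrix n n ℂ} (hA : A.PosSemidef) (hB : B.PosSemidef) {s : ℝ}
    (hs0 : 0 ≤ s) (hs1 : s ≤ 1) : (((1 - s : ℝ) : ℂ) • A + (s : ℂ) • B).PosSemidef :=
  (hA.smul (by exact_mod_cast sub_nonneg.2 hs1)).add (hB.smul (by exact_mod_cast hs0))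

lemma mix_pd {A B : Matrix n n ℂ} (hA : A.PosDef) (hB : B.PosDef) {s : ℝ}
    (hs0 : 0 ≤ s) (hs1 : s ≤ 1) : (((1 - s : ℝ) : ℂ) • A + (s : ℂ) • B).PosDef := by
  rcases hs0.eq_or_lt with rfl | h
  · simpa using hA
  · exact Matrix.PosDef.posSemidef_add (hA.posSemidef.smul (by exact_mod_cast sub_nonneg.2 hs1))
      (hB.smul (by exact_mod_cast h))

lemma lieb {A₀ A₁ B₀ B₁ : Matrix n n ℂ} (hA₀ : A₀.PosDef) (hA₁ : A₁.PosDef)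
    (hB₀ : B₀.PosSemidef) (hB₁ : B₁.PosSemidef) (K : Matrix n n ℂ) {q : ℝ}
    (hq : q ∈ Set.Ioo (0 : ℝ) 1) {s : ℝ} (hs0 : 0 ≤ s) (hs1 : s ≤ 1) :
    (1 - s) * (Kᴴ * mpow A₀ (1 - q) * K * mpow B₀ q).trace.re +
      s * (Kᴴ * mpow A₁ (1 - q) * K * mpow B₁ q).trace.re ≤
    (Kᴴ * mpow (((1 - s : ℝ) : ℂ) • A₀ + (s : ℂ) • A₁) (1 - q) * K *
      mpow (((1 - s : ℝ) : ℂ) • B₀ + (s : ℂ) • B₁) q).trace.re := by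
  have hA := mix_pd hA₀ hA₁ hs0 hs1
  have hB := mix_psd hB₀ hB₁ hs0 hs1
  obtain ⟨i0, e0⟩ := lieb_integral hA₀ hB₀ K hq
  obtain ⟨i1, e1⟩ := lieb_integral hA₁ hB₁ K hq
  obtain ⟨i2, e2⟩ := lieb_integral hA hB K hq
  have hc : 0 < ∫ t in Set.Ioi 0, Real.rpowIntegrand₀₁ q t 1 := Real.integral_rpowIntegrand₀₁_one_pos hq
  refine le_of_mul_le_mul_right ?_ hc
  rw [add_mul, mul_assoc (1 - s), mul_assoc s, ← e0, ← e1, ← e2, ← MeasureTheory.integral_const_mul,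
    ← MeasureTheory.integral_const_mul,
    ← MeasureTheory.integral_add (i0.const_mul _) (i1.const_mul _)]
  refine MeasureTheory.setIntegral_mono_on ((i0.const_mul _).add (i1.const_mul _)) i2
    measurableSet_Ioi fun l hl => ?_
  have hl' : 0 < l := hl
  obtain ⟨M, hM⟩ := hform_attained hA hB K hl'
  rw [hM, qform_affine]
  have h0 := hform_le hA₀ hB₀ K M hl'
  have h1 := hform_le hA₁ hB₁ K M hl'
  have hs' := sub_nonneg.2 hs1
  have hp : 0 ≤ l ^ (q - 1) := by positivity
  calc _ = l ^ (q - 1) * ((1 - s) * hform hA₀.1 hB₀.1 K l + s * hform hA₁.1 hB₁.1 K l) := by ring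
    _ ≤ _ := by gcongr

lemma mpow_add {A : Matrix n n ℂ} (hA : A.PosDef) (a b : ℝ) :
    mpow A a * mpow A b = mpow A (a + b) := by
  rw [mpow, mpow, mpow, mfun_mul_mfun hA.1]
  exact mfun_congr hA.1 fun i => (Real.rpow_add (hA.eigenvalues_pos i) a b).symm

lemma mpow_zero' {A : Matrix n n ℂ} (hA : A.PosDef) : mpow A 0 = 1 := by
  simp only [mpow, Real.rpow_zero]
  exact mfun_one hA.1

lemma mpow_psd {A : Matrix n n ℂ} (hA : A.PosSemidef) (a : ℝ) : (mpow A a).PosSemidef :=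
  mfun_psd hA fun _ hx => Real.rpow_nonneg hx a

lemma mpow_conj (A : Matrix n n ℂ) (a : ℝ) : (mpow A a)ᴴ = mpow A a := mfun_herm A _

lemma trace_mfun_const_mul {A : Matrix n n ℂ} (hA : A.IsHermitian) (c : ℝ) (f : ℝ → ℝ) :
    (mfun (fun x => c * f x) A).trace.re = c * (mfun f A).trace.re := by
  rw [trace_mfun hA, trace_mfun hA, Finset.mul_sum]

lemma young_one {X Y : Matrix n n ℂ} (hX : X.PosSemidef) (hY : Y.PosSemidef) {q : ℝ}
    (hq : q ∈ Set.Ioo (0 : ℝ) 1) :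
    (X * mpow Y q).trace.re ≤ (1 - q) * (mpow X (1 / (1 - q))).trace.re + q * Y.trace.re := by
  have hp : 0 < 1 - q := sub_pos.2 hq.2
  have h := trace_young hX hY (f := fun x => x) (g := fun y => y ^ q)
    (F := fun x => (1 - q) * x ^ (1 / (1 - q))) (G := fun y => q * y) (fun x y hx hy => by
      have := Real.geom_mean_le_arith_mean2_weighted hp.le hq.1.le
        (Real.rpow_nonneg hx (1 / (1 - q))) hy (by ring)
      rwa [← Real.rpow_mul hx, one_div_mul_cancel hp.ne', Real.rpow_one] at this)
  rwa [mfun_id hX.1, trace_mfun_const_mul hX.1, trace_mfun_const_mul hY.1, mfun_id hY.1] at h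

lemma young_two {P R : Matrix n n ℂ} (hP : P.PosSemidef) (hR : R.PosSemidef) {q : ℝ}
    (hq : q ∈ Set.Ioo (0 : ℝ) 1) :
    (P * R).trace.re ≤ q * (mpow P (1 / q)).trace.re +
      (1 - q) * (mpow R (1 / (1 - q))).trace.re := by
  have hp : 0 < 1 - q := sub_pos.2 hq.2
  have h := trace_young hP hR (f := fun x => x) (g := fun y => y)
    (F := fun x => q * x ^ (1 / q)) (G := fun y => (1 - q) * y ^ (1 / (1 - q)))
    (fun x y hx hy => by
      have := Real.geom_mean_le_arith_mean2_weighted hq.1.le hp.le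
        (Real.rpow_nonneg hx (1 / q)) (Real.rpow_nonneg hy (1 / (1 - q))) (by ring)
      rwa [← Real.rpow_mul hx, ← Real.rpow_mul hy, one_div_mul_cancel hp.ne',
        one_div_mul_cancel hq.1.ne', Real.rpow_one, Real.rpow_one] at this)
  rwa [mfun_id hP.1, trace_mfun_const_mul hP.1, trace_mfun_const_mul hR.1, mfun_id hR.1] at h

lemma young_one_eq {X : Matrix n n ℂ} (hX : X.PosSemidef) {q : ℝ}
    (hq : q ∈ Set.Ioo (0 : ℝ) 1) :
    X * mpow (mpow X (1 / (1 - q))) q = mpow X (1 / (1 - q)) := by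
  have hp : 0 < 1 - q := sub_pos.2 hq.2
  nth_rw 1 [← mfun_id hX.1]
  simp only [mpow]
  rw [mfun_mfun hX.1, mfun_mul_mfun hX.1]
  refine mfun_congr hX.1 fun i => ?_
  have hx := hX.eigenvalues_nonneg i
  generalize hX.1.eigenvalues i = x at *
  rw [← Real.rpow_mul hx]
  have : 1 / (1 - q) = 1 + 1 / (1 - q) * q := by field_simp; ring
  nth_rw 2 [this]
  rw [Real.rpow_add' hx (by rw [← this]; positivity), Real.rpow_one]

lemma epstein {A₀ A₁ : Matrix n n ℂ} (hA₀ : A₀.PosDef) (hA₁ : A₁.PosDef)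
    (K : Matrix n n ℂ) {q : ℝ}
    (hq : q ∈ Set.Ioo (0 : ℝ) 1) {s : ℝ} (hs0 : 0 ≤ s) (hs1 : s ≤ 1) :
    (1 - s) * (mpow (Kᴴ * mpow A₀ (1 - q) * K) (1 / (1 - q))).trace.re +
      s * (mpow (Kᴴ * mpow A₁ (1 - q) * K) (1 / (1 - q))).trace.re ≤
    (mpow (Kᴴ * mpow (((1 - s : ℝ) : ℂ) • A₀ + (s : ℂ) • A₁) (1 - q) * K)
      (1 / (1 - q))).trace.re := by
  have hp : 0 < 1 - q := sub_pos.2 hq.2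
  have hA := mix_pd hA₀ hA₁ hs0 hs1
  have psd {A : Matrix n n ℂ} (hA : A.PosDef) : (Kᴴ * mpow A (1 - q) * K).PosSemidef :=
    (mpow_psd hA.posSemidef _).conjTranspose_mul_mul_same K
  have hY₀ := mpow_psd (psd hA₀) (1 / (1 - q))
  have hY₁ := mpow_psd (psd hA₁) (1 / (1 - q))
  have h1 := lieb hA₀ hA₁ hY₀ hY₁ K hq hs0 hs1
  have h2 := young_one (psd hA) (mix_psd hY₀ hY₁ hs0 hs1) hq
  rw [young_one_eq (psd hA₀) hq, young_one_eq (psd hA₁) hq] at h1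
  have h3 := h1.trans h2
  simp only [Matrix.trace_add, Matrix.trace_smul, Complex.add_re, smul_eq_mul,
    Complex.re_ofReal_mul] at h3
  refine le_of_mul_le_mul_left ?_ hp
  linarith

lemma dual_le {ρ σ : Matrix n n ℂ} (hρ : ρ.PosSemidef) (hσ : σ.PosDef) (K : Matrix n n ℂ)
    {q c : ℝ} (hq : q ∈ Set.Ioo (0 : ℝ) 1) (hc : 1 - q = -c + -c) :
    (ρ * (K * Kᴴ)).trace.re ≤ q * (mpow (mpow σ c * ρ * mpow σ c) (1 / q)).trace.re +
      (1 - q) * (mpow (Kᴴ * mpow σ (1 - q) * K) (1 / (1 - q))).trace.re := by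
  have hP : (mpow σ c * ρ * mpow σ c).PosSemidef := by
    have := hρ.conjTranspose_mul_mul_same (mpow σ c)
    rwa [mpow_conj] at this
  have h := young_two hP (Matrix.posSemidef_self_mul_conjTranspose (mpow σ (-c) * K)) hq
  have hinv : mpow σ c * mpow σ (-c) = 1 := by
    rw [mpow_add hσ, add_neg_cancel, mpow_zero' hσ]
  have hinv' : mpow σ (-c) * mpow σ c = 1 := by
    rw [mpow_add hσ, neg_add_cancel, mpow_zero' hσ]
  have e1 : (mpow σ c * ρ * mpow σ c * ((mpow σ (-c) * K) * (mpow σ (-c) * K)ᴴ)).trace =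
      (ρ * (K * Kᴴ)).trace := by
    rw [Matrix.conjTranspose_mul, mpow_conj]
    calc _ = (mpow σ c * (ρ * (mpow σ c * mpow σ (-c)) * (K * Kᴴ) * mpow σ (-c))).trace := by
          simp only [mul_assoc]
      _ = _ := by
        rw [hinv, mul_one, Matrix.trace_mul_comm, mul_assoc, hinv', mul_one]
  have e2 : (mpow σ (-c) * K)ᴴ * (mpow σ (-c) * K) = Kᴴ * mpow σ (1 - q) * K := by
    rw [Matrix.conjTranspose_mul, mpow_conj, hc, ← mpow_add hσ]
    simp only [mul_assoc]
  have e3 := trace_flip (mpow σ (-c) * K) (fun x => x ^ (1 / (1 - q)))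
  rw [e2] at e3
  rw [e1] at h
  rw [show (mpow (mpow σ (-c) * K * (mpow σ (-c) * K)ᴴ) (1 / (1 - q))).trace.re = _ from e3] at h
  exact h

lemma dual_attained {ρ σ : Matrix n n ℂ} (hρ : ρ.PosSemidef) (hσ : σ.PosDef)
    {q c : ℝ} (hq : q ∈ Set.Ioo (0 : ℝ) 1) (hc : 1 - q = -c + -c) : ∃ K : Matrix n n ℂ,
    (ρ * (K * Kᴴ)).trace.re = (mpow (mpow σ c * ρ * mpow σ c) (1 / q)).trace.re ∧
    (mpow (Kᴴ * mpow σ (1 - q) * K) (1 / (1 - q))).trace.re =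
      (mpow (mpow σ c * ρ * mpow σ c) (1 / q)).trace.re := by
  have hp : 0 < 1 - q := sub_pos.2 hq.2
  have hq0 := hq.1
  have hP : (mpow σ c * ρ * mpow σ c).PosSemidef := by
    have := hρ.conjTranspose_mul_mul_same (mpow σ c)
    rwa [mpow_conj] at this
  have hinv : mpow σ c * mpow σ (-c) = 1 := by
    rw [mpow_add hσ, add_neg_cancel, mpow_zero' hσ]
  have hinv' : mpow σ (-c) * mpow σ c = 1 := by
    rw [mpow_add hσ, neg_add_cancel, mpow_zero' hσ]
  have hpos : 0 < (1 - q) / q := div_pos hp hq0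
  set P := mpow σ c * ρ * mpow σ c with hPdef
  set D := mpow P ((1 - q) / q / 2) with hD
  have hDD : D * D = mpow P ((1 - q) / q) := by
    rw [hD, mpow, mpow, mfun_mul_mfun hP.1]
    refine mfun_congr hP.1 fun i => ?_
    rw [← Real.rpow_add' (hP.eigenvalues_nonneg i) (by positivity), add_halves]
  have hDc : Dᴴ = D := mpow_conj _ _
  refine ⟨mpow σ c * D, ?_, ?_⟩
  · rw [Matrix.conjTranspose_mul, hDc, mpow_conj]
    have e : (ρ * (mpow σ c * D * (D * mpow σ c))).trace = (P * (D * D)).trace := by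
      rw [← mul_assoc, ← mul_assoc, Matrix.trace_mul_comm, hPdef]
      simp only [mul_assoc]
    rw [e, hDD]
    congr 2
    nth_rw 1 [← mfun_id hP.1]
    simp only [mpow]
    rw [mfun_mul_mfun hP.1]
    refine mfun_congr hP.1 fun i => ?_
    have hx := hP.eigenvalues_nonneg i
    have : 1 / q = 1 + (1 - q) / q := by field_simp; ring
    rw [this, Real.rpow_add' hx (by positivity), Real.rpow_one]
  · have e : (mpow σ c * D)ᴴ * mpow σ (1 - q) * (mpow σ c * D) = mpow P ((1 - q) / q) := by
      rw [← hDD, Matrix.conjTranspose_mul, hDc, mpow_conj, hc, ← mpow_add hσ]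
      calc _ = D * (mpow σ c * mpow σ (-c)) * (mpow σ (-c) * mpow σ c) * D := by
            simp only [mul_assoc]
        _ = _ := by rw [hinv, hinv', mul_one, mul_one]
    rw [e]
    congr 2
    simp only [mpow]
    rw [mfun_mfun hP.1]
    refine mfun_congr hP.1 fun i => ?_
    rw [← Real.rpow_mul (hP.eigenvalues_nonneg i)]
    congr 1
    field_simp

lemma Q_convex {ρ₀ ρ₁ σ₀ σ₁ : Matrix n n ℂ} (hρ₀ : ρ₀.PosSemidef) (hρ₁ : ρ₁.PosSemidef)
    (hσ₀ : σ₀.PosDef) (hσ₁ : σ₁.PosDef) {q c : ℝ} (hq : q ∈ Set.Ioo (0 : ℝ) 1)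
    (hc : 1 - q = -c + -c) {s : ℝ} (hs0 : 0 ≤ s) (hs1 : s ≤ 1) :
    (mpow (mpow (((1 - s : ℝ) : ℂ) • σ₀ + (s : ℂ) • σ₁) c *
      (((1 - s : ℝ) : ℂ) • ρ₀ + (s : ℂ) • ρ₁) *
      mpow (((1 - s : ℝ) : ℂ) • σ₀ + (s : ℂ) • σ₁) c) (1 / q)).trace.re ≤
    (1 - s) * (mpow (mpow σ₀ c * ρ₀ * mpow σ₀ c) (1 / q)).trace.re +
      s * (mpow (mpow σ₁ c * ρ₁ * mpow σ₁ c) (1 / q)).trace.re := by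
  have hp : 0 < 1 - q := sub_pos.2 hq.2
  have hs' := sub_nonneg.2 hs1
  obtain ⟨K, h1, h2⟩ := dual_attained (mix_psd hρ₀ hρ₁ hs0 hs1) (mix_pd hσ₀ hσ₁ hs0 hs1) hq hc
  have h3 := mul_le_mul_of_nonneg_left (dual_le hρ₀ hσ₀ K hq hc) hs'
  have h4 := mul_le_mul_of_nonneg_left (dual_le hρ₁ hσ₁ K hq hc) hs0
  have h5 := mul_le_mul_of_nonneg_left (epstein hσ₀ hσ₁ K hq hs0 hs1) hp.le
  rw [h2] at h5
  simp only [add_mul, Matrix.smul_mul, Matrix.trace_add, Matrix.trace_smul, Complex.add_re,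
    smul_eq_mul, Complex.re_ofReal_mul] at h1
  refine le_of_mul_le_mul_left ?_ hq.1
  linarith

lemma trace_mpow_nonneg {A : Matrix n n ℂ} (hA : A.PosSemidef) (a : ℝ) :
    0 ≤ (mpow A a).trace.re := by
  rw [mpow, trace_mfun hA.1]
  exact Finset.sum_nonneg fun i _ => Real.rpow_nonneg (hA.eigenvalues_nonneg i) a

end helpers

theorem exp_D_jointly_convex {n : ℕ} (α : ℝ) (hα1 : 1 < α) (hα2 : α ≤ 2)
    (ρ₀ ρ₁ σ₀ σ₁ : Matrix (Fin n) (Fin n) ℂ)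
    (hρ₀ : ρ₀.PosDef) (hρ₁ : ρ₁.PosDef) (hσ₀ : σ₀.PosDef) (hσ₁ : σ₁.PosDef)
    (t : ℝ) (ht : 0 < t) (htr₀ : ρ₀.trace = (t : ℂ)) (htr₁ : ρ₁.trace = (t : ℂ))
    (s : ℝ) (hs0 : 0 ≤ s) (hs1 : s ≤ 1) :
    (fun (ρ σ : Matrix (Fin n) (Fin n) ℂ) =>
      ((mpow (mpow σ ((1 - α) / (2 * α)) * ρ * mpow σ ((1 - α) / (2 * α))) α).trace.re ^ (1 / (α - 1) : ℝ)))
        (((1 - s : ℝ) : ℂ) • ρ₀ + ((s : ℝ) : ℂ) • ρ₁)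
        (((1 - s : ℝ) : ℂ) • σ₀ + ((s : ℝ) : ℂ) • σ₁) ≤
      (1 - s) * (fun (ρ σ : Matrix (Fin n) (Fin n) ℂ) =>
      ((mpow (mpow σ ((1 - α) / (2 * α)) * ρ * mpow σ ((1 - α) / (2 * α))) α).trace.re ^ (1 / (α - 1) : ℝ))) ρ₀ σ₀ + s * (fun (ρ σ : Matrix (Fin n) (Fin n) ℂ) =>
      ((mpow (mpow σ ((1 - α) / (2 * α)) * ρ * mpow σ ((1 - α) / (2 * α))) α).trace.re ^ (1 / (α - 1) : ℝ))) ρ₁ σ₁ := by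
  have hα0 : 0 < α := by linarith
  have hq : 1 / α ∈ Set.Ioo (0 : ℝ) 1 :=
    ⟨by positivity, by rw [div_lt_one hα0]; exact hα1⟩
  have hc : 1 - 1 / α = -((1 - α) / (2 * α)) + -((1 - α) / (2 * α)) := by
    field_simp
    ring
  have key := Q_convex hρ₀.posSemidef hρ₁.posSemidef hσ₀ hσ₁ hq hc hs0 hs1
  rw [one_div_one_div] at key
  have nn {ρ σ : Matrix (Fin n) (Fin n) ℂ} (hρ : ρ.PosDef) :
      0 ≤ (mpow (mpow σ ((1 - α) / (2 * α)) * ρ * mpow σ ((1 - α) / (2 * α))) α).trace.re := by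
    have := hρ.posSemidef.conjTranspose_mul_mul_same (mpow σ ((1 - α) / (2 * α)))
    rw [mpow_conj] at this
    exact trace_mpow_nonneg this _
  have hr : 1 ≤ 1 / (α - 1) := by
    rw [le_div_iff₀ (by linarith)]
    linarith
  beta_reduce
  refine (Real.rpow_le_rpow (nn (mix_pd hρ₀ hρ₁ hs0 hs1)) key (by linarith)).trans ?_
  exact (convexOn_rpow hr).2 (nn hρ₀) (nn hρ₁) (sub_nonneg.2 hs1) hs0 (by ring)
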